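/- Let (E_1^N,...,E_N^N)_{N≥N_0} be a sequence of symmetric sequences of events such that for all N ≥ N_0 the events E_1^N,...,E_N^N are correlated up to order l_max with the same correlation coefficients C_1,...,C_{l_max} (where C_l := N^l G_l^{(N)}(1,...,1) and C_l = 0 for l > l_max). Let p_N(s) be the probability that exactly s of the N events occur. Then for every s ∈ ℕ, p_N(s) converges as N → ∞ to p_∞(s), where the limit distribution has characteristic function χ(u) = Σ_{s≥0} e^{ius} p_∞(s) = exp[Σ_{l=1}^{l_max} Σ_{t=0}^{l} (−1)^{l−t} (C_l/l!) C(l,t) e^{itu}]. -/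

import Mathlib

open MeasureTheory Finset Filter
open scoped Classical

/-- The joint probability `P(𝟙_{E_1}=r_1, …, 𝟙_{E_N}=r_N)`. -/
noncomputable def jointProb {Ω : Type*} [MeasurableSpace Ω] (μ : Measure Ω) {N : ℕ}
    (E : Fin N → Set Ω) (r : Fin N → Bool) : ℝ :=
  (μ {ω | ∀ i, ω ∈ E i ↔ r i = true}).toReal

/-- A finite sequence of events is symmetric if the joint distribution of the
indicator functions is invariant under permutations of the events. -/
def IsSymmetricEvents {Ω : Type*} [MeasurableSpace Ω] (μ : Measure Ω) {N : ℕ}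
    (E : Fin N → Set Ω) : Prop :=
  ∀ (σ : Equiv.Perm (Fin N)) (r : Fin N → Bool),
    jointProb μ E r = jointProb μ E (r ∘ σ)

/-- The probability function of order `k`:
`P_k(r_1,…,r_k) = P(𝟙_{E_1}=r_1, …, 𝟙_{E_k}=r_k)`. -/
noncomputable def probFun {Ω : Type*} [MeasurableSpace Ω] (μ : Measure Ω) {N : ℕ}
    (E : Fin N → Set Ω) (k : ℕ) (hk : k ≤ N) (r : Fin k → Bool) : ℝ :=
  (μ {ω | ∀ i : Fin k, (ω ∈ E (Fin.castLE hk i) ↔ r i = true)}).toReal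

/-- The sum, over all set partitions of `{1,…,k}` into at least two blocks, of the
product over the blocks `B` of `G_{|B|}` evaluated at the arguments `(r_i)_{i∈B}`,
taken in increasing index order. -/
noncomputable def partSum (G : (k : ℕ) → (Fin k → Bool) → ℝ) (k : ℕ)
    (r : Fin k → Bool) : ℝ :=
  ∑ π : Finset (Finset (Fin k)),
    if ((∀ B ∈ π, B.Nonempty) ∧ (∀ i : Fin k, ∃! B, B ∈ π ∧ i ∈ B)) ∧ 2 ≤ π.card then
      ∏ B ∈ π, G B.card (fun j => r (B.orderIsoOfFin rfl j).1)
    else 0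

/-- The count probability `p_N(s)`: the probability that exactly `s` of the `N`
events occur. -/
noncomputable def countProb {Ω : Type*} [MeasurableSpace Ω] (μ : Measure Ω) {N : ℕ}
    (E : Fin N → Set Ω) (s : ℕ) : ℝ :=
  (μ {ω | (∑ i : Fin N, if ω ∈ E i then 1 else 0) = s}).toReal

/-!
Let `S` be the number of the `N` events that occur. By symmetry its binomial moments are
`E[C(S,k)] = C(N,k) P_k(1,…,1)`, and unfolding the recursion for the correlation functions gives
`P_k(1,…,1) = ∑_π ∏_{B ∈ π} G_{|B|}(1,…,1) = m_k / N^k`, where `m_k` are the moments belonging to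
the cumulants `C_l`. Hence the binomial moments converge to `m_k / k!` and are dominated by
`|m_k| / k!`. The exponential formula `∑_k (m_k / k!) w^k = exp (∑_l (C_l / l!) w^l)` makes these
bounds summable against `2^k`, so that binomial inversion carries the convergence over to the count
probabilities, and at `w = e^{iu} - 1` it evaluates the characteristic function of the limit.
-/

section PartitionSum

variable {α R : Type*} [DecidableEq α] [CommSemiring R]

/-- The moment-cumulant sum `∑_π ∏_{B ∈ π} c_{|B|}` over the set partitions `π` of `s`. It expresses
the joint moment attached to `s` through the cumulants `c` when these depend only on the block
size. -/
def partitionSum (c : ℕ → R) (s : Finset α) : R :=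
  ∑ π : Finpartition s, ∏ B ∈ π.parts, c #B

@[simp]
theorem partitionSum_empty (c : ℕ → R) : partitionSum c (∅ : Finset α) = 1 := by
  have hparts (π : Finpartition (∅ : Finset α)) : π.parts = ∅ := π.parts_eq_empty_iff.2 rfl
  have : Unique (Finpartition (∅ : Finset α)) :=
    inferInstanceAs (Unique (Finpartition (⊥ : Finset α)))
  simp [partitionSum, hparts]

/-- The set partition of `insert a s` in which the block of `a` is `insert a t` and the other blocks
are those of the partition `π` of `s \ t`. -/
def insertBlock {a : α} {s t : Finset α} (ha : a ∉ s) (ht : t ⊆ s) (π : Finpartition (s \ t)) :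
    Finpartition (insert a s) :=
  π.extend (insert_ne_empty a t) (by grind [Finset.disjoint_left])
    (by rw [sup_eq_union]; grind)

theorem insert_notMem_parts {a : α} {s t : Finset α} (ha : a ∉ s) (π : Finpartition (s \ t)) :
    insert a t ∉ π.parts := fun h =>
  ha (mem_sdiff.1 (π.subset h (mem_insert_self a t))).1

section insertBlock

variable {a : α} {s t : Finset α} (ha : a ∉ s) (ht : t ⊆ s) (π : Finpartition (s \ t))

theorem parts_insertBlock : (insertBlock ha ht π).parts = insert (insert a t) π.parts := rfl

theorem part_insertBlock : (insertBlock ha ht π).part a = insert a t :=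
  Finpartition.part_eq_of_mem _ (mem_insert_self _ _) (mem_insert_self a t)

theorem prod_parts_insertBlock (c : ℕ → R) :
    ∏ B ∈ (insertBlock ha ht π).parts, c #B = c (#t + 1) * ∏ B ∈ π.parts, c #B := by
  rw [parts_insertBlock, prod_insert (insert_notMem_parts ha π),
    card_insert_of_notMem fun h => ha (ht h)]

theorem insertBlock_injective {t' : Finset α} {ht' : t' ⊆ s} {π' : Finpartition (s \ t')}
    (h : insertBlock ha ht π = insertBlock ha ht' π') :
    (⟨t, π⟩ : Σ t, Finpartition (s \ t)) = ⟨t', π'⟩ := by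
  obtain rfl : t = t' := by
    have hins : insert a t = insert a t' := by
      rw [← part_insertBlock ha ht π, h, part_insertBlock]
    rw [← erase_insert fun hat => ha (ht hat), hins, erase_insert fun hat => ha (ht' hat)]
  have hparts : π.parts = π'.parts := by
    rw [← erase_insert (insert_notMem_parts ha π), ← parts_insertBlock ha ht, h, parts_insertBlock,
      erase_insert (insert_notMem_parts ha π')]
  rw [Finpartition.ext hparts]

theorem exists_insertBlock_eq (ρ : Finpartition (insert a s)) :
    ∃ (t : Finset α) (ht : t ⊆ s) (π : Finpartition (s \ t)), insertBlock ha ht π = ρ := by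
  set A := ρ.part a
  have hAρ : A ∈ ρ.parts := ρ.part_mem.2 (mem_insert_self a s)
  have haA : a ∈ A := ρ.mem_part_self.2 (mem_insert_self a s)
  have hAs : A.erase a ⊆ s := subset_insert_iff.1 (ρ.subset hAρ)
  have hsup : (ρ.parts.erase A).sup id = s \ A.erase a := by
    have hdisj : ∀ B ∈ ρ.parts, ∀ x ∈ B, x ∈ A → B = A := fun B hB x hxB hxA =>
      ρ.eq_of_mem_parts hB hAρ hxB hxA
    ext x
    have hx : x ∈ insert a s ↔ ∃ B ∈ ρ.parts, x ∈ B :=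
      ⟨ρ.exists_mem, fun ⟨B, hB, hxB⟩ => ρ.subset hB hxB⟩
    simp only [Finset.mem_sup, id_eq]
    grind
  refine ⟨A.erase a, hAs, ρ.ofSubset (erase_subset A ρ.parts) hsup, Finpartition.ext ?_⟩
  rw [parts_insertBlock, insert_erase haA]
  exact insert_erase hAρ

end insertBlock

theorem partitionSum_insert (c : ℕ → R) {a : α} {s : Finset α} (ha : a ∉ s) :
    partitionSum c (insert a s) = ∑ t ∈ s.powerset, c (#t + 1) * partitionSum c (s \ t) := by
  simp_rw [partitionSum, mul_sum]
  rw [sum_sigma']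
  symm
  refine sum_bij (fun x hx => insertBlock ha (mem_powerset.1 (mem_sigma.1 hx).1) x.2)
    (fun _ _ => mem_univ _) (fun _ _ _ _ h => insertBlock_injective ha _ _ h) (fun ρ _ => ?_)
    fun x _ => (prod_parts_insertBlock ha _ x.2 c).symm
  obtain ⟨t, ht, π, rfl⟩ := exists_insertBlock_eq ha ρ
  exact ⟨⟨t, π⟩, mem_sigma.2 ⟨mem_powerset.2 ht, mem_univ _⟩, rfl⟩

/-- The sequence of moments attached to a sequence of cumulants, defined by the recursion
`m_{n+1} = ∑_j C(n,j) c_{j+1} m_{n-j}`; the zeroth cumulant `c 0` plays no role. -/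
def momentOfCumulant (c : ℕ → R) : ℕ → R
  | 0 => 1
  | n + 1 => ∑ j : Fin (n + 1), n.choose j * (c (j + 1) * momentOfCumulant c (n - j))

@[simp]
theorem momentOfCumulant_zero (c : ℕ → R) : momentOfCumulant c 0 = 1 := by
  rw [momentOfCumulant]

theorem momentOfCumulant_succ (c : ℕ → R) (n : ℕ) :
    momentOfCumulant c (n + 1) =
      ∑ j ∈ range (n + 1), n.choose j * (c (j + 1) * momentOfCumulant c (n - j)) := by
  rw [momentOfCumulant, sum_range]

theorem partitionSum_eq_momentOfCumulant (c : ℕ → R) (s : Finset α) :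
    partitionSum c s = momentOfCumulant c #s := by
  induction s using Finset.strongInduction with
  | H s ih =>
    obtain rfl | ⟨a, ha⟩ := s.eq_empty_or_nonempty
    · simp
    obtain ⟨s, has, rfl⟩ : ∃ s', a ∉ s' ∧ insert a s' = s :=
      ⟨s.erase a, notMem_erase a s, insert_erase ha⟩
    have hterm : ∀ t ∈ s.powerset, c (#t + 1) * partitionSum c (s \ t) =
        c (#t + 1) * momentOfCumulant c (#s - #t) := fun t ht => by
      rw [ih _ (sdiff_subset.trans_ssubset (ssubset_insert has)),
        card_sdiff_of_subset (mem_powerset.1 ht)]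
    rw [partitionSum_insert c has, card_insert_of_notMem has, momentOfCumulant_succ,
      sum_congr rfl hterm, sum_powerset_apply_card fun j => c (j + 1) * momentOfCumulant c (#s - j)]
    simp_rw [nsmul_eq_mul]

theorem momentOfCumulant_eq_partitionSum (c : ℕ → R) (n : ℕ) :
    momentOfCumulant c n = partitionSum c (range n) := by
  rw [partitionSum_eq_momentOfCumulant, card_range]

theorem momentOfCumulant_congr {c d : ℕ → R} {n : ℕ} (h : ∀ l, 1 ≤ l → l ≤ n → c l = d l) :
    momentOfCumulant c n = momentOfCumulant d n := by
  simp only [momentOfCumulant_eq_partitionSum]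
  refine sum_congr rfl fun π _ => prod_congr rfl fun B hB =>
    h _ (card_pos.2 (π.nonempty_of_mem_parts hB)) ?_
  simpa using card_le_card (π.subset hB)

theorem momentOfCumulant_mul_pow (c : ℕ → R) (a : R) (n : ℕ) :
    momentOfCumulant (fun l => c l * a ^ l) n = momentOfCumulant c n * a ^ n := by
  simp only [momentOfCumulant_eq_partitionSum, partitionSum, prod_mul_distrib, prod_pow_eq_pow_sum,
    Finpartition.sum_card_parts, card_range, sum_mul]

theorem map_momentOfCumulant {S : Type*} [CommSemiring S] (f : R →+* S) (c : ℕ → R) (n : ℕ) :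
    f (momentOfCumulant c n) = momentOfCumulant (fun l => f (c l)) n := by
  simp only [momentOfCumulant_eq_partitionSum, partitionSum, map_sum, map_prod]

theorem ofReal_momentOfCumulant (c : ℕ → ℝ) (n : ℕ) :
    ((momentOfCumulant c n : ℝ) : ℂ) = momentOfCumulant (fun l => (c l : ℂ)) n :=
  map_momentOfCumulant Complex.ofRealHom c n

theorem norm_momentOfCumulant_le {A : Type*} [NormedCommRing A] [NormOneClass A] (c : ℕ → A)
    (n : ℕ) : ‖momentOfCumulant c n‖ ≤ momentOfCumulant (fun l => ‖c l‖) n := by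
  simp only [momentOfCumulant_eq_partitionSum]
  exact norm_sum_le_of_le _ fun π _ => norm_prod_le π.parts fun B => c #B

theorem momentOfCumulant_nonneg {c : ℕ → ℝ} (hc : ∀ l, 0 ≤ c l) (n : ℕ) :
    0 ≤ momentOfCumulant c n := by
  rw [momentOfCumulant_eq_partitionSum]
  exact sum_nonneg fun _ _ => prod_nonneg fun _ _ => hc _

theorem momentOfCumulant_le_momentOfCumulant {c d : ℕ → ℝ} (hc : ∀ l, 0 ≤ c l)
    (hcd : ∀ l, c l ≤ d l) (n : ℕ) : momentOfCumulant c n ≤ momentOfCumulant d n := by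
  simp only [momentOfCumulant_eq_partitionSum]
  exact sum_le_sum fun _ _ => prod_le_prod (fun _ _ => hc _) fun _ _ => hcd _

end PartitionSum

section CorrelationFunctions

theorem sum_finpartition_univ {α R : Type*} [Fintype α] [DecidableEq α] [AddCommMonoid R]
    (f : Finset (Finset α) → R) :
    ∑ π : Finpartition (univ : Finset α), f π.parts =
      ∑ π : Finset (Finset α) with
        (∀ B ∈ π, B.Nonempty) ∧ ∀ i, ∃! B, B ∈ π ∧ i ∈ B, f π := by
  refine sum_bij (fun π _ => π.parts) (fun π _ => mem_filter.2 ⟨mem_univ _, ?_⟩)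
    (fun _ _ _ _ h => Finpartition.ext h) (fun π hπ => ?_) fun _ _ => rfl
  · exact ⟨fun _ => π.nonempty_of_mem_parts, fun i => π.existsUnique_mem (mem_univ i)⟩
  · obtain ⟨hne, huniq⟩ := (mem_filter.1 hπ).2
    exact ⟨Finpartition.ofExistsUnique π (fun B _ => subset_univ B) (fun i _ => huniq i)
      fun h => not_nonempty_empty (hne ∅ h), mem_univ _, rfl⟩

theorem eq_singleton_univ_of_card_lt_two {α : Type*} [Fintype α] [Nonempty α]
    {π : Finset (Finset α)} (hπ : ∀ i, ∃! B, B ∈ π ∧ i ∈ B) (hcard : #π < 2) : π = {univ} := by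
  obtain ⟨B, hB⟩ : ∃ B, π = {B} := by
    obtain ⟨B, ⟨hB, -⟩, -⟩ := hπ (Classical.arbitrary α)
    exact card_eq_one.1 (by have := card_pos.2 ⟨B, hB⟩; omega)
  rw [hB, singleton_inj, eq_univ_iff_forall]
  intro i
  obtain ⟨B', ⟨hB', hi⟩, -⟩ := hπ i
  rw [hB, mem_singleton] at hB'
  rwa [← hB']

theorem sum_finpartition_univ_eq_add {α R : Type*} [Fintype α] [DecidableEq α] [Nonempty α]
    [AddCommMonoid R] (f : Finset (Finset α) → R) :
    ∑ π : Finpartition (univ : Finset α), f π.parts =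
      f {univ} + ∑ π : Finset (Finset α),
        if ((∀ B ∈ π, B.Nonempty) ∧ ∀ i, ∃! B, B ∈ π ∧ i ∈ B) ∧ 2 ≤ #π then f π else 0 := by
  have huniv : (∀ B ∈ ({univ} : Finset (Finset α)), B.Nonempty) ∧
      ∀ i : α, ∃! B, B ∈ ({univ} : Finset (Finset α)) ∧ i ∈ B :=
    ⟨by simp [univ_nonempty],
      fun i => ⟨univ, by simp, fun B hB => mem_singleton.1 hB.1⟩⟩
  rw [sum_finpartition_univ, ← add_sum_erase _ f (mem_filter.2 ⟨mem_univ _, huniv⟩), ← sum_filter]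
  congr 2
  ext π
  simp only [mem_erase, mem_filter, mem_univ, true_and, and_comm (a := π ≠ {univ})]
  refine and_congr_right fun hπ => ⟨fun hne => ?_, ?_⟩
  · by_contra! hcard
    exact hne (eq_singleton_univ_of_card_lt_two hπ.2 hcard)
  · rintro hcard rfl
    simp at hcard

theorem add_partSum_const (G : (k : ℕ) → (Fin k → Bool) → ℝ) {k : ℕ} (hk : 1 ≤ k) (b : Bool) :
    G k (fun _ => b) + partSum G k (fun _ => b) =
      momentOfCumulant (fun l => G l fun _ => b) k := by
  have : Nonempty (Fin k) := ⟨⟨0, hk⟩⟩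
  calc G k (fun _ => b) + partSum G k (fun _ => b)
      = partitionSum (fun l => G l fun _ => b) (univ : Finset (Fin k)) := by
        rw [partitionSum, sum_finpartition_univ_eq_add fun π => ∏ B ∈ π, G #B fun _ => b,
          prod_singleton, card_fin, partSum]
        congr!
    _ = momentOfCumulant (fun l => G l fun _ => b) k := by
        rw [partitionSum_eq_momentOfCumulant, card_fin]

theorem probFun_true_eq {Ω : Type*} [MeasurableSpace Ω] (μ : Measure Ω) [IsProbabilityMeasure μ]
    {N : ℕ} {E : Fin N → Set Ω} {G : (k : ℕ) → (Fin k → Bool) → ℝ}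
    (hG : ∀ k, 1 ≤ k → ∀ (hk : k ≤ N) (r : Fin k → Bool),
      G k r = probFun μ E k hk r - partSum G k r)
    {C : ℕ → ℝ} (hC : ∀ l, 1 ≤ l → l ≤ N → G l (fun _ => true) = C l / (N : ℝ) ^ l)
    {k : ℕ} (hk : k ≤ N) :
    probFun μ E k hk (fun _ => true) = momentOfCumulant C k / (N : ℝ) ^ k := by
  obtain rfl | hk₀ := k.eq_zero_or_pos
  · simp [probFun]
  calc probFun μ E k hk (fun _ => true)
      = G k (fun _ => true) + partSum G k (fun _ => true) := by rw [hG k hk₀ hk, sub_add_cancel]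
    _ = momentOfCumulant (fun l => G l fun _ => true) k := add_partSum_const G hk₀ true
    _ = momentOfCumulant (fun l => C l * (N : ℝ)⁻¹ ^ l) k :=
        momentOfCumulant_congr fun l hl hlk => by
          rw [hC l hl (hlk.trans hk), inv_pow, div_eq_mul_inv]
    _ = momentOfCumulant C k / (N : ℝ) ^ k := by
        rw [momentOfCumulant_mul_pow, inv_pow, div_eq_mul_inv]

end CorrelationFunctions

section ExponentialFormula

theorem iteratedDeriv_cexp_comp {Q : ℂ → ℂ} (hQ : Differentiable ℂ Q) (n : ℕ) (z : ℂ) :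
    iteratedDeriv n (fun w => Complex.exp (Q w)) z =
      Complex.exp (Q z) * momentOfCumulant (fun l => iteratedDeriv l Q z) n := by
  induction n using Nat.strong_induction_on with
  | _ n ih =>
    cases n with
    | zero => simp
    | succ n =>
      -- The Leibniz rule for the derivative `Q' e^Q` of `e^Q` is the recursion for the moments.
      have hderiv : deriv (fun w => Complex.exp (Q w)) =
          fun w => deriv Q w * Complex.exp (Q w) := funext fun w => by
        rw [(hQ w).hasDerivAt.cexp.deriv, mul_comm]
      rw [iteratedDeriv_succ', hderiv, iteratedDeriv_fun_mul hQ.deriv.contDiff.contDiffAt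
        hQ.cexp.contDiff.contDiffAt, momentOfCumulant_succ, mul_sum]
      refine sum_congr rfl fun j _ => ?_
      rw [← iteratedDeriv_succ', ih (n - j) (by omega)]
      ring

theorem iteratedDeriv_sum_div_factorial_mul_pow_zero {c : ℕ → ℂ} {L : ℕ} (hc : ∀ l, L < l → c l = 0)
    {l : ℕ} (hl : 1 ≤ l) :
    iteratedDeriv l (fun w => ∑ i ∈ range L, c (i + 1) / (i + 1).factorial * w ^ (i + 1)) 0 =
      c l := by
  obtain ⟨l, rfl⟩ := Nat.exists_eq_add_of_le' hl
  rw [iteratedDeriv_fun_sum fun i _ => by fun_prop]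
  simp only [iteratedDeriv_const_mul_field, iteratedDeriv_fun_pow_zero, add_left_inj, Nat.cast_ite,
    Nat.cast_zero, mul_ite, mul_zero, sum_ite_eq, mem_range]
  split_ifs with hlL
  · exact div_mul_cancel₀ _ (Nat.cast_ne_zero.2 (Nat.factorial_ne_zero _))
  · exact (hc _ (by omega)).symm

theorem hasSum_momentOfCumulant_of_finite {c : ℕ → ℂ} {L : ℕ} (hc : ∀ l, L < l → c l = 0) :
    HasSum (fun k => momentOfCumulant c k / k.factorial)
      (Complex.exp (∑ l ∈ range L, c (l + 1) / (l + 1).factorial)) := by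
  set Q : ℂ → ℂ := fun w => ∑ l ∈ range L, c (l + 1) / (l + 1).factorial * w ^ (l + 1) with hQ
  have hQd : Differentiable ℂ Q := by fun_prop
  have htaylor := Complex.hasSum_taylorSeries_of_entire hQd.cexp 0 1
  have hQ1 : Q 1 = ∑ l ∈ range L, c (l + 1) / (l + 1).factorial := by simp [hQ]
  have hcoeff (k : ℕ) : iteratedDeriv k (fun w => Complex.exp (Q w)) 0 = momentOfCumulant c k := by
    rw [iteratedDeriv_cexp_comp hQd, momentOfCumulant_congr fun l hl _ =>
      iteratedDeriv_sum_div_factorial_mul_pow_zero hc hl]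
    simp [hQ]
  rw [← hQ1]
  refine htaylor.congr_fun ?_
  simp [hcoeff, div_eq_inv_mul]

/-- The cumulant sequence `c` with all the cumulants of order larger than `L` replaced by zero. It
reduces the exponential formula to the case of finitely many cumulants. -/
def truncateCumulant {R : Type*} [Zero R] (c : ℕ → R) (L l : ℕ) : R :=
  if l ≤ L then c l else 0

theorem momentOfCumulant_truncateCumulant {R : Type*} [CommSemiring R] (c : ℕ → R) {k L : ℕ}
    (hk : k ≤ L) : momentOfCumulant (truncateCumulant c L) k = momentOfCumulant c k :=
  momentOfCumulant_congr fun _ _ hl => if_pos (hl.trans hk)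

theorem norm_truncateCumulant_le {A : Type*} [SeminormedAddCommGroup A] (c : ℕ → A) (L l : ℕ) :
    ‖truncateCumulant c L l‖ ≤ ‖c l‖ := by
  rw [truncateCumulant]
  split_ifs <;> simp

theorem hasSum_momentOfCumulant_truncateCumulant (c : ℕ → ℂ) (L : ℕ) :
    HasSum (fun k => momentOfCumulant (truncateCumulant c L) k / k.factorial)
      (Complex.exp (∑ l ∈ range L, c (l + 1) / (l + 1).factorial)) := by
  convert hasSum_momentOfCumulant_of_finite (c := truncateCumulant c L) fun l hl =>
    if_neg hl.not_ge using 2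
  refine sum_congr rfl fun l hl => ?_
  rw [truncateCumulant, if_pos (Nat.succ_le_of_lt (mem_range.1 hl))]

theorem hasSum_momentOfCumulant_truncateCumulant_real (c : ℕ → ℝ) (L : ℕ) :
    HasSum (fun k => momentOfCumulant (truncateCumulant c L) k / k.factorial)
      (Real.exp (∑ l ∈ range L, c (l + 1) / (l + 1).factorial)) := by
  rw [← Complex.hasSum_ofReal]
  push_cast
  convert hasSum_momentOfCumulant_truncateCumulant (fun l => (c l : ℂ)) L using 3 with k
  rw [ofReal_momentOfCumulant]
  congr 1
  funext l
  by_cases hl : l ≤ L <;> simp [truncateCumulant, hl]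

theorem summable_momentOfCumulant_of_nonneg {c : ℕ → ℝ} (hc : ∀ l, 0 ≤ c l)
    (hsum : Summable fun l => c l / l.factorial) :
    Summable fun k => momentOfCumulant c k / k.factorial := by
  have hnonneg {d : ℕ → ℝ} (hd : ∀ l, 0 ≤ d l) (k : ℕ) : 0 ≤ momentOfCumulant d k / k.factorial :=
    div_nonneg (momentOfCumulant_nonneg hd k) k.factorial.cast_nonneg
  have htrunc (L l : ℕ) : 0 ≤ truncateCumulant c L l := by
    rw [truncateCumulant]
    split_ifs <;> simp [hc]
  refine summable_of_sum_range_le (hnonneg hc)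
    (c := Real.exp (∑' l, c (l + 1) / (l + 1).factorial)) fun K => ?_
  calc ∑ k ∈ range K, momentOfCumulant c k / k.factorial
      = ∑ k ∈ range K, momentOfCumulant (truncateCumulant c K) k / k.factorial :=
        sum_congr rfl fun k hk => by
          rw [momentOfCumulant_truncateCumulant c (mem_range.1 hk).le]
    _ ≤ Real.exp (∑ l ∈ range K, c (l + 1) / (l + 1).factorial) :=
        sum_le_hasSum _ (fun k _ => hnonneg (htrunc K) k)
          (hasSum_momentOfCumulant_truncateCumulant_real c K)
    _ ≤ Real.exp (∑' l, c (l + 1) / (l + 1).factorial) := by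
        gcongr
        exact ((summable_nat_add_iff 1).2 hsum).sum_le_tsum _ fun l _ =>
          div_nonneg (hc _) (Nat.cast_nonneg _)

theorem norm_momentOfCumulant_div_factorial_le {c d : ℕ → ℂ} (hd : ∀ l, ‖d l‖ ≤ ‖c l‖) (k : ℕ) :
    ‖momentOfCumulant d k / k.factorial‖ ≤ momentOfCumulant (fun l => ‖c l‖) k / k.factorial := by
  rw [norm_div, Complex.norm_natCast]
  gcongr
  exact (norm_momentOfCumulant_le d k).trans
    (momentOfCumulant_le_momentOfCumulant (fun l => norm_nonneg _) hd k)

theorem tendsto_tsum_momentOfCumulant_truncateCumulant {c : ℕ → ℂ}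
    (hc : Summable fun k => momentOfCumulant (fun l => ‖c l‖) k / k.factorial) :
    Tendsto (fun L => ∑' k, momentOfCumulant (truncateCumulant c L) k / k.factorial) atTop
      (nhds (∑' k, momentOfCumulant c k / k.factorial)) := by
  refine tendsto_tsum_of_dominated_convergence hc (fun k => ?_) (Eventually.of_forall fun L =>
    norm_momentOfCumulant_div_factorial_le (norm_truncateCumulant_le c L))
  refine tendsto_const_nhds.congr' ((eventually_ge_atTop k).mono fun L hL => ?_)
  simp only [momentOfCumulant_truncateCumulant c hL]

theorem hasSum_momentOfCumulant {c : ℕ → ℂ} (hc : Summable fun l => ‖c l‖ / l.factorial) :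
    HasSum (fun k => momentOfCumulant c k / k.factorial)
      (Complex.exp (∑' l, c (l + 1) / (l + 1).factorial)) := by
  have hdom : Summable fun k => momentOfCumulant (fun l => ‖c l‖) k / k.factorial :=
    summable_momentOfCumulant_of_nonneg (fun l => norm_nonneg _) hc
  have hcs : Summable fun l => c (l + 1) / (l + 1).factorial :=
    (summable_nat_add_iff (f := fun l => c l / (l.factorial : ℂ)) 1).2 <|
      .of_norm (by simpa using hc)
  have hlim := tendsto_tsum_momentOfCumulant_truncateCumulant hdom
  simp only [fun L => (hasSum_momentOfCumulant_truncateCumulant c L).tsum_eq] at hlim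
  rw [tendsto_nhds_unique hcs.hasSum.tendsto_sum_nat.cexp hlim]
  exact (hdom.of_norm_bounded (norm_momentOfCumulant_div_factorial_le fun _ => le_rfl)).hasSum

theorem hasSum_momentOfCumulant_mul_pow {c : ℕ → ℂ} {z : ℂ}
    (hc : Summable fun l => ‖c l‖ / l.factorial * ‖z‖ ^ l) :
    HasSum (fun k => momentOfCumulant c k / k.factorial * z ^ k)
      (Complex.exp (∑' l, c (l + 1) / (l + 1).factorial * z ^ (l + 1))) := by
  have hc' : Summable fun l => ‖c l * z ^ l‖ / l.factorial := by
    simpa only [norm_mul, norm_pow, mul_div_right_comm] using hc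
  simpa only [momentOfCumulant_mul_pow, mul_div_right_comm] using hasSum_momentOfCumulant hc'

end ExponentialFormula

section InclusionExclusion

theorem sum_range_choose_mul_sub_one_pow {R : Type*} [CommRing R] (n : ℕ) (x : R) :
    ∑ k ∈ range (n + 1), n.choose k * (x - 1) ^ k = x ^ n := by
  conv_rhs => rw [← sub_add_cancel x 1, add_pow]
  simp [mul_comm]

theorem coeff_X_sub_one_pow {R : Type*} [CommRing R] (k s : ℕ) :
    ((Polynomial.X - 1 : Polynomial R) ^ k).coeff s = (-1) ^ (k - s) * k.choose s := by
  have hX : (Polynomial.X - 1 : Polynomial R) = Polynomial.X + Polynomial.C (-1) := by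
    simp [sub_eq_add_neg]
  rw [hX, Polynomial.coeff_X_add_C_pow]

theorem sum_range_neg_one_pow_mul_choose_mul_choose {R : Type*} [CommRing R] {n N : ℕ} (hn : n ≤ N)
    (s : ℕ) :
    ∑ k ∈ range (N + 1), (-1 : R) ^ (k - s) * k.choose s * n.choose k = if n = s then 1 else 0 := by
  calc ∑ k ∈ range (N + 1), (-1 : R) ^ (k - s) * k.choose s * n.choose k
      = ∑ k ∈ range (n + 1), (-1 : R) ^ (k - s) * k.choose s * n.choose k := by
        refine (sum_subset (range_subset_range.2 (by omega)) fun k _ hk => ?_).symm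
        rw [Nat.choose_eq_zero_of_lt (n := n) (by simpa using hk), Nat.cast_zero, mul_zero]
    _ = (∑ k ∈ range (n + 1), (n.choose k : Polynomial R) * (Polynomial.X - 1) ^ k).coeff s := by
        simp only [Polynomial.finsetSum_coeff, Polynomial.coeff_natCast_mul, coeff_X_sub_one_pow,
          mul_comm]
    _ = if n = s then 1 else 0 := by
        rw [sum_range_choose_mul_sub_one_pow, Polynomial.coeff_X_pow]
        simp only [eq_comm]

variable {Ω ι : Type*} [Fintype ι]

/-- The number of the events `E i` which occur at the outcome `ω`. -/
noncomputable def eventCount (E : ι → Set Ω) (ω : Ω) : ℕ :=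
  ∑ i, if ω ∈ E i then 1 else 0

theorem eventCount_eq_card (E : ι → Set Ω) (ω : Ω) : eventCount E ω = #{i | ω ∈ E i} := by
  rw [eventCount, card_filter]

theorem choose_eventCount (E : ι → Set Ω) (k : ℕ) (ω : Ω) :
    ((eventCount E ω).choose k : ℝ) =
      ∑ A ∈ powersetCard k univ, (⋂ i ∈ A, E i).indicator 1 ω := by
  have hfilter : powersetCard k {i | ω ∈ E i} =
      (powersetCard k univ).filter fun A => ω ∈ ⋂ i ∈ A, E i := by
    ext A
    simp [mem_powersetCard, subset_iff, and_comm]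
  rw [eventCount_eq_card, ← card_powersetCard, hfilter, card_filter]
  simp [Set.indicator_apply]

theorem indicator_eventCount_eq (E : ι → Set Ω) (s : ℕ) (ω : Ω) :
    (eventCount E ⁻¹' {s}).indicator (1 : Ω → ℝ) ω =
      ∑ k ∈ range (Fintype.card ι + 1), (-1 : ℝ) ^ (k - s) * k.choose s *
        ∑ A ∈ powersetCard k univ, (⋂ i ∈ A, E i).indicator 1 ω := by
  have hcount : eventCount E ω ≤ Fintype.card ι := by
    rw [eventCount_eq_card]
    exact card_le_univ _
  simp_rw [← choose_eventCount, sum_range_neg_one_pow_mul_choose_mul_choose hcount]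
  simp only [Set.indicator_apply, Set.mem_preimage, Set.mem_singleton_iff, Pi.one_apply]

variable [MeasurableSpace Ω] {μ : Measure Ω}

theorem measurable_eventCount {E : ι → Set Ω} (hE : ∀ i, MeasurableSet (E i)) :
    Measurable (eventCount E) :=
  measurable_sum univ fun i _ => Measurable.ite (hE i) measurable_const measurable_const

theorem measureReal_eventCount_eq [IsFiniteMeasure μ] {E : ι → Set Ω}
    (hE : ∀ i, MeasurableSet (E i)) (s : ℕ) :
    μ.real (eventCount E ⁻¹' {s}) =
      ∑ k ∈ range (Fintype.card ι + 1), (-1 : ℝ) ^ (k - s) * k.choose s *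
        ∑ A ∈ powersetCard k univ, μ.real (⋂ i ∈ A, E i) := by
  have hinter (A : Finset ι) : MeasurableSet (⋂ i ∈ A, E i) :=
    .biInter A.countable_toSet fun i _ => hE i
  have hint (A : Finset ι) : Integrable ((⋂ i ∈ A, E i).indicator (1 : Ω → ℝ)) μ :=
    (integrable_const 1).indicator (hinter A)
  rw [← integral_indicator_one (measurable_eventCount hE (measurableSet_singleton s))]
  simp_rw [indicator_eventCount_eq]
  rw [integral_finsetSum _ fun k _ => (integrable_finsetSum _ fun A _ => hint A).const_mul _]
  simp_rw [integral_const_mul, integral_finsetSum _ fun A _ => hint A,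
    integral_indicator_one (hinter _)]

end InclusionExclusion

section BinomialMoments

/-- The mass at `s` of the distribution on `ℕ` with binomial moments `E[C(X,k)] = b k`, recovered by
binomial inversion. For `k < s` the truncated exponent `k - s` is harmless since then
`k.choose s = 0`. -/
noncomputable def probOfBinomialMoment (b : ℕ → ℝ) (s : ℕ) : ℝ :=
  ∑' k, (-1) ^ (k - s) * k.choose s * b k

theorem tendsto_probOfBinomialMoment {ι : Type*} {l : Filter ι} {b : ι → ℕ → ℝ} {b' B : ℕ → ℝ}
    (hB : Summable fun k => B k * 2 ^ k) (hb : ∀ k, Tendsto (fun i => b i k) l (nhds (b' k)))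
    (hbB : ∀ i k, |b i k| ≤ B k) (s : ℕ) :
    Tendsto (fun i => probOfBinomialMoment (b i) s) l (nhds (probOfBinomialMoment b' s)) := by
  refine tendsto_tsum_of_dominated_convergence hB (fun k => (hb k).const_mul _)
    (Eventually.of_forall fun i k => ?_)
  have hchoose : (k.choose s : ℝ) ≤ 2 ^ k := mod_cast Nat.choose_le_two_pow k s
  calc ‖(-1) ^ (k - s) * k.choose s * b i k‖ = |b i k| * k.choose s := by
        simp [mul_comm]
    _ ≤ B k * 2 ^ k := mul_le_mul (hbB i k) hchoose (Nat.cast_nonneg _)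
        ((abs_nonneg _).trans (hbB i k))

theorem hasSum_add_pow {R : Type*} [CommSemiring R] [TopologicalSpace R] (x y : R) (k : ℕ) :
    HasSum (fun s => x ^ s * y ^ (k - s) * k.choose s) ((x + y) ^ k) := by
  rw [add_pow]
  refine hasSum_sum_of_ne_finset_zero fun s hs => ?_
  rw [Nat.choose_eq_zero_of_lt (n := k) (by simpa using hs), Nat.cast_zero, mul_zero]

theorem summable_pow_mul_choose_mul {b : ℕ → ℝ} {z : ℂ}
    (hb : Summable fun k => |b k| * (1 + ‖z‖) ^ k) :
    Summable fun x : ℕ × ℕ => z ^ x.2 * (-1) ^ (x.1 - x.2) * x.1.choose x.2 * (b x.1 : ℂ) := by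
  have hfiber (k : ℕ) : HasSum (fun s => ‖z ^ s * (-1) ^ (k - s) * k.choose s * (b k : ℂ)‖)
      (|b k| * (1 + ‖z‖) ^ k) := by
    simpa [add_comm, mul_comm] using (hasSum_add_pow ‖z‖ 1 k).mul_right |b k|
  rw [← summable_norm_iff, summable_prod_of_nonneg fun _ => norm_nonneg _]
  exact ⟨fun k => (hfiber k).summable, hb.congr fun k => (hfiber k).tsum_eq.symm⟩

theorem hasSum_pow_mul_probOfBinomialMoment {b : ℕ → ℝ} {z : ℂ}
    (hb : Summable fun k => |b k| * (1 + ‖z‖) ^ k) :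
    HasSum (fun s => z ^ s * (probOfBinomialMoment b s : ℂ)) (∑' k, (z - 1) ^ k * b k) := by
  have hsum := summable_pow_mul_choose_mul hb
  have htotal := hsum.hasSum.prod_fiberwise fun k =>
    (hasSum_add_pow z (-1) k).mul_right (b k : ℂ)
  simp only [sub_eq_add_neg, htotal.tsum_eq]
  refine ((Equiv.prodComm ℕ ℕ).hasSum_iff.2 hsum.hasSum).prod_fiberwise fun s => ?_
  have hs := hsum.comp_injective (i := fun k => (k, s)) (Prod.mk_left_injective s)
  have hprob : z ^ s * (probOfBinomialMoment b s : ℂ) =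
      ∑' k, z ^ s * (-1) ^ (k - s) * k.choose s * (b k : ℂ) := by
    rw [probOfBinomialMoment, Complex.ofReal_tsum, ← tsum_mul_left]
    push_cast
    simp only [mul_assoc]
  rw [hprob]
  exact hs.hasSum

end BinomialMoments

section JointLaw

variable {Ω : Type*} [MeasurableSpace Ω] {μ : Measure Ω} {N : ℕ} {E : Fin N → Set Ω}

theorem measureReal_indicators_mem [IsFiniteMeasure μ] (hE : ∀ i, MeasurableSet (E i))
    (S : Finset (Fin N → Bool)) :
    μ.real {ω | (fun i => decide (ω ∈ E i)) ∈ S} = ∑ r ∈ S, jointProb μ E r := by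
  set X : Ω → Fin N → Bool := fun ω i => decide (ω ∈ E i) with hX
  have hXm : Measurable X := measurable_pi_iff.2 fun i =>
    measurable_to_bool (by simpa [hX, Set.preimage] using hE i)
  have hfiber (r : Fin N → Bool) : μ.real (X ⁻¹' {r}) = jointProb μ E r := by
    rw [jointProb, ← Measure.real]
    congr 1
    ext ω
    refine funext_iff.trans (forall_congr' fun i => ?_)
    cases r i <;> simp [hX]
  exact (sum_congr rfl fun r _ => (hfiber r).symm).trans
    (sum_measureReal_preimage_singleton S fun r _ => hXm (measurableSet_singleton r)) |>.symm

namespace IsSymmetricEvents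

theorem jointProb_comp (hsym : IsSymmetricEvents μ E) (σ : Equiv.Perm (Fin N))
    (r : Fin N → Bool) : jointProb μ (E ∘ σ) r = jointProb μ E r := by
  rw [hsym σ⁻¹ r]
  simp only [jointProb, Function.comp_apply]
  congr 2
  ext ω
  exact ⟨fun h i => by simpa using h (σ⁻¹ i), fun h i => by simpa using h (σ i)⟩

theorem measureReal_biInter_map [IsFiniteMeasure μ] (hsym : IsSymmetricEvents μ E)
    (hE : ∀ i, MeasurableSet (E i)) (σ : Equiv.Perm (Fin N)) (A : Finset (Fin N)) :
    μ.real (⋂ i ∈ A.map σ.toEmbedding, E i) = μ.real (⋂ i ∈ A, E i) := by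
  have hinter (F : Fin N → Set Ω) : ⋂ i ∈ A, F i =
      {ω | (fun i => decide (ω ∈ F i)) ∈ ({r | ∀ i ∈ A, r i = true} : Finset (Fin N → Bool))} := by
    ext ω
    simp
  calc μ.real (⋂ i ∈ A.map σ.toEmbedding, E i)
      = μ.real (⋂ i ∈ A, (E ∘ σ) i) := by
        rw [map_eq_image, set_biInter_finset_image]
        rfl
    _ = μ.real (⋂ i ∈ A, E i) := by
        rw [hinter, hinter, measureReal_indicators_mem (E := E ∘ σ) fun i => hE (σ i),
          measureReal_indicators_mem hE]
        exact sum_congr rfl fun r _ => hsym.jointProb_comp σ r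

theorem measureReal_biInter [IsFiniteMeasure μ] (hsym : IsSymmetricEvents μ E)
    (hE : ∀ i, MeasurableSet (E i)) {A : Finset (Fin N)} {k : ℕ} (hk : k ≤ N) (hA : #A = k) :
    μ.real (⋂ i ∈ A, E i) = probFun μ E k hk (fun _ => true) := by
  obtain ⟨σ, rfl⟩ := Equiv.Perm.exists_map_finset_eq (univ.map (Fin.castLEEmb hk)) A (by simp [hA])
  rw [hsym.measureReal_biInter_map hE, probFun, Measure.real]
  congr 2
  ext ω
  simp

theorem countProb_eq_probOfBinomialMoment [IsFiniteMeasure μ] (hsym : IsSymmetricEvents μ E)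
    (hE : ∀ i, MeasurableSet (E i)) {m : ℕ → ℝ}
    (hm : ∀ k (hk : k ≤ N), probFun μ E k hk (fun _ => true) = m k) (s : ℕ) :
    countProb μ E s = probOfBinomialMoment (fun k => N.choose k * m k) s := by
  have hsum {k : ℕ} (hk : k ∈ range (N + 1)) :
      ∑ A ∈ powersetCard k (univ : Finset (Fin N)), μ.real (⋂ i ∈ A, E i) = N.choose k * m k := by
    have hkN : k ≤ N := Nat.lt_succ_iff.1 (mem_range.1 hk)
    rw [sum_congr rfl fun A hA =>
      (hsym.measureReal_biInter hE hkN (mem_powersetCard.1 hA).2).trans (hm k hkN)]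
    simp
  rw [probOfBinomialMoment, tsum_eq_sum (s := range (N + 1)) fun k hk => by
    rw [Nat.choose_eq_zero_of_lt (n := N) (by simpa using hk), Nat.cast_zero, zero_mul, mul_zero]]
  refine (measureReal_eventCount_eq hE s).trans ?_
  rw [Fintype.card_fin]
  exact sum_congr rfl fun k hk => by rw [hsum hk]

end IsSymmetricEvents

end JointLaw

section PoissonLimit

theorem abs_choose_mul_div_pow_le (N k : ℕ) (x : ℝ) :
    |N.choose k * (x / N ^ k)| ≤ |x| / k.factorial := by
  obtain rfl | hN := N.eq_zero_or_pos
  · cases k with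
    | zero => simp
    | succ k => simpa using by positivity
  have hchoose := Nat.choose_le_pow_div (α := ℝ) k N
  calc |N.choose k * (x / N ^ k)| = N.choose k * (|x| / N ^ k) := by simp [abs_mul, abs_div]
    _ ≤ N ^ k / k.factorial * (|x| / N ^ k) := by gcongr
    _ = |x| / k.factorial := by field_simp

theorem tendsto_choose_mul_div_pow (k : ℕ) (x : ℝ) :
    Tendsto (fun N : ℕ => N.choose k * (x / N ^ k)) atTop (nhds (x / k.factorial)) := by
  have hmul : Tendsto (fun N : ℕ => (N : ℝ) * (N : ℝ)⁻¹) atTop (nhds 1) := by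
    refine tendsto_const_nhds.congr' ((eventually_ge_atTop 1).mono fun N hN => ?_)
    exact (mul_inv_cancel₀ (Nat.cast_ne_zero.2 (by omega))).symm
  convert (ProbabilityTheory.tendsto_choose_mul_pow_atTop k hmul).mul_const x using 2 with N
  · rw [inv_pow, div_eq_mul_inv, mul_comm x, mul_assoc]
  · rw [one_pow, one_div_mul_eq_div]

theorem summable_momentOfCumulant_div_factorial_mul_pow {c : ℕ → ℝ} {a : ℝ} (ha : 0 ≤ a)
    (hc : Summable fun l => |c l| / l.factorial * a ^ l) :
    Summable fun k => |momentOfCumulant c k| / k.factorial * a ^ k := by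
  have hc' : Summable fun l => |c l| * a ^ l / l.factorial := by
    simpa only [mul_div_right_comm] using hc
  refine (summable_momentOfCumulant_of_nonneg (fun l => by positivity) hc').of_nonneg_of_le
    (fun k => by positivity) fun k => ?_
  rw [momentOfCumulant_mul_pow, mul_div_right_comm]
  gcongr
  exact norm_momentOfCumulant_le c k

theorem hasSum_pow_mul_probOfBinomialMoment_momentOfCumulant {c : ℕ → ℝ} {z : ℂ}
    (hc : Summable fun l => |c l| / l.factorial * (1 + ‖z‖) ^ l) :
    HasSum (fun s => z ^ s *
        (probOfBinomialMoment (fun k => momentOfCumulant c k / k.factorial) s : ℂ))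
      (Complex.exp (∑' l, (c (l + 1) : ℂ) / (l + 1).factorial * (z - 1) ^ (l + 1))) := by
  have hb : Summable fun k => |momentOfCumulant c k / k.factorial| * (1 + ‖z‖) ^ k := by
    simpa [abs_div] using summable_momentOfCumulant_div_factorial_mul_pow (by positivity) hc
  have hz : ‖z - 1‖ ≤ 1 + ‖z‖ := (norm_sub_le z 1).trans_eq (by rw [norm_one, add_comm])
  have hc' : Summable fun l => ‖(c l : ℂ)‖ / l.factorial * ‖z - 1‖ ^ l := by
    refine hc.of_nonneg_of_le (fun l => by positivity) fun l => ?_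
    rw [Complex.norm_real, Real.norm_eq_abs]
    gcongr
  convert hasSum_pow_mul_probOfBinomialMoment hb using 1
  rw [← (hasSum_momentOfCumulant_mul_pow hc').tsum_eq]
  exact tsum_congr fun k => by
    rw [Complex.ofReal_div, ofReal_momentOfCumulant, Complex.ofReal_natCast, mul_comm]

theorem tsum_mul_exp_sub_one_pow_eq {c : ℕ → ℝ} {L : ℕ} (hc : ∀ l, L < l → c l = 0) (w : ℂ) :
    ∑' l, (c (l + 1) : ℂ) / (l + 1).factorial * (Complex.exp (Complex.I * w) - 1) ^ (l + 1) =
      ∑ l ∈ Icc 1 L, ∑ t ∈ range (l + 1), (-1) ^ (l - t) * (c l / l.factorial) * l.choose t *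
        Complex.exp (Complex.I * t * w) := by
  have hterm (l : ℕ) : (c l : ℂ) / l.factorial * (Complex.exp (Complex.I * w) - 1) ^ l =
      ∑ t ∈ range (l + 1), (-1) ^ (l - t) * (c l / l.factorial) * l.choose t *
        Complex.exp (Complex.I * t * w) := by
    rw [sub_eq_add_neg, add_pow, mul_sum]
    refine sum_congr rfl fun t _ => ?_
    rw [← Complex.exp_nat_mul, show Complex.I * t * w = t * (Complex.I * w) by ring]
    ring
  rw [tsum_eq_sum (s := range L) fun l hl => by
    rw [hc _ (by simpa [Nat.lt_succ_iff] using hl), Complex.ofReal_zero, zero_div, zero_mul]]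
  simp_rw [hterm]
  rw [← Ico_succ_right_eq_Icc, sum_Ico_eq_sum_range]
  simp [add_comm]

end PoissonLimit

-- The radius `2` is the largest value of `|e^{iu} - 1|`.
theorem stmt18_general (N₀ : ℕ)
    (Ω : ℕ → Type*) (mΩ : ∀ N, MeasurableSpace (Ω N)) (μ : ∀ N, Measure (Ω N))
    (hprob : ∀ N, IsProbabilityMeasure (μ N))
    (E : ∀ N, Fin N → Set (Ω N)) (hE : ∀ N i, MeasurableSet (E N i))
    (hsym : ∀ N, N₀ ≤ N → IsSymmetricEvents (μ N) (E N))
    (G : ∀ _ : ℕ, (k : ℕ) → (Fin k → Bool) → ℝ)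
    (hG : ∀ N, N₀ ≤ N → ∀ (k : ℕ), 1 ≤ k → ∀ (hk : k ≤ N) (r : Fin k → Bool),
      G N k r = probFun (μ N) (E N) k hk r - partSum (G N) k r)
    (C : ℕ → ℝ)
    (hC : ∀ N, N₀ ≤ N → ∀ l : ℕ, 1 ≤ l → l ≤ N →
      G N l (fun _ => true) = C l / (N : ℝ) ^ l)
    (hCsum : Summable fun l => |C l| / l.factorial * 2 ^ l) :
    ∃ p : ℕ → ℝ,
      (∀ s : ℕ, Tendsto (fun N => countProb (μ N) (E N) s) atTop (nhds (p s))) ∧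
      ∀ u : ℝ,
        HasSum (fun s : ℕ => Complex.exp (Complex.I * u * s) * (p s : ℂ))
          (Complex.exp (∑' l : ℕ, (C (l + 1) : ℂ) / (l + 1).factorial *
            (Complex.exp (Complex.I * u) - 1) ^ (l + 1))) := by
  have hmsum := summable_momentOfCumulant_div_factorial_mul_pow zero_le_two hCsum
  refine ⟨probOfBinomialMoment fun k => momentOfCumulant C k / k.factorial, fun s => ?_,
    fun u => ?_⟩
  · refine (tendsto_probOfBinomialMoment hmsum (fun k => tendsto_choose_mul_div_pow k _)
      (fun N k => abs_choose_mul_div_pow_le N k _) s).congr' ?_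
    filter_upwards [eventually_ge_atTop N₀] with N hN
    exact ((hsym N hN).countProb_eq_probOfBinomialMoment (hE N)
      (fun k hk => probFun_true_eq (μ N) (hG N hN) (hC N hN) hk) s).symm
  · have hnorm : ‖Complex.exp (Complex.I * u)‖ = 1 := by
      rw [mul_comm, Complex.norm_exp_ofReal_mul_I]
    have hCsum' : Summable fun l =>
        |C l| / l.factorial * (1 + ‖Complex.exp (Complex.I * u)‖) ^ l := by
      rwa [hnorm, one_add_one_eq_two]
    simpa only [← Complex.exp_nat_mul, mul_comm] using
      hasSum_pow_mul_probOfBinomialMoment_momentOfCumulant hCsum'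

/-- **Main theorem (Poisson-like distribution).**
For a sequence (in `N`) of symmetric sequences of `N` events that are correlated
up to order `lmax` with the same correlation coefficients `C_1,…,C_lmax`, the count
probabilities `p_N(s)` converge as `N → ∞` to a limit `p_∞(s)` whose characteristic
function is `χ(u) = exp[Σ_{l=1}^{lmax} Σ_{t=0}^l (−1)^{l−t} (C_l/l!) C(l,t) e^{itu}]`. -/
theorem stmt18 (N₀ lmax : ℕ) (hlmax : 1 ≤ lmax)
    (Ω : ℕ → Type*) (mΩ : ∀ N, MeasurableSpace (Ω N)) (μ : ∀ N, Measure (Ω N))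
    (hprob : ∀ N, IsProbabilityMeasure (μ N))
    (E : ∀ N, Fin N → Set (Ω N)) (hE : ∀ N i, MeasurableSet (E N i))
    (hsym : ∀ N, N₀ ≤ N → IsSymmetricEvents (μ N) (E N))
    -- `G N` is the family of correlation functions of the `N`-th sequence of events:
    (G : ∀ _ : ℕ, (k : ℕ) → (Fin k → Bool) → ℝ)
    (hG : ∀ N, N₀ ≤ N → ∀ (k : ℕ), 1 ≤ k → ∀ (hk : k ≤ N) (r : Fin k → Bool),
      G N k r = probFun (μ N) (E N) k hk r - partSum (G N) k r)
    -- all sequences have the same correlation coefficients `C l = N^l G_l(1,…,1)`,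
    -- and they are correlated up to order `lmax`:
    (C : ℕ → ℝ)
    (hC : ∀ N, N₀ ≤ N → ∀ l : ℕ, 1 ≤ l → l ≤ N →
      G N l (fun _ => true) = C l / (N : ℝ) ^ l)
    (hCmax : C lmax ≠ 0) (hCz : ∀ l : ℕ, lmax < l → C l = 0) :
    ∃ p : ℕ → ℝ,
      (∀ s : ℕ, Tendsto (fun N => countProb (μ N) (E N) s) atTop (nhds (p s))) ∧
      ∀ u : ℝ,
        (∑' s : ℕ, Complex.exp (Complex.I * u * s) * (p s : ℂ)) =
          Complex.exp (∑ l ∈ Finset.Icc 1 lmax, ∑ t ∈ Finset.range (l + 1),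
            (-1 : ℂ) ^ (l - t) * ((C l : ℂ) / l.factorial) * (l.choose t) *
              Complex.exp (Complex.I * t * u)) := by
  have hCsum : Summable fun l => |C l| / l.factorial * 2 ^ l :=
    summable_of_ne_finset_zero (s := range (lmax + 1)) fun l hl => by
      rw [hCz l (by simpa using hl), abs_zero, zero_div, zero_mul]
  obtain ⟨p, hlim, hchar⟩ := stmt18_general N₀ Ω mΩ μ hprob E hE hsym G hG C hC hCsum
  refine ⟨p, hlim, fun u => ?_⟩
  rw [(hchar u).tsum_eq, tsum_mul_exp_sub_one_pow_eq hCz]
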